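/- Consider any growth schedule (with edge-activation distance d = 2) for a graph G. Let u and w be vertices generated in slots t₁ and t₂ respectively, with t₁ ≤ t₂ (the initiator is regarded as generated in slot 0). Then for every slot t ≥ t₂, the distance between u and w in G_t is at least their distance in G_{t₂}; that is, the distance between any two existing vertices never decreases in later slots. -/

import Mathlib

/-!
The graph at the end of slot `s` receives a weak homomorphism from the graph at the end of slot
`s + 1`: send each vertex generated in slot `s + 1` to its parent and fix every other vertex.
Since the activation distance is `2`, a newborn `v` is joined only to vertices of the closed
neighborhood of its parent, so every edge is sent to an edge or to a single vertex
(`GrowthSchedule.retract_adj`). Walks are therefore sent to walks that are no longer, and as the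
map fixes the vertices that already existed, their distance cannot drop from slot `s` to slot
`s + 1`. Deletions are harmless, and induction on the slot concludes.
-/


open SimpleGraph

/-- A growth schedule of `k` slots for target graph `G`, with edge-activation
distance `d`.  `born v` is the slot in which `v` is generated (the initiator has
`born = 0`), `parent v` is the vertex for which `v` was generated, `graph t` is
the graph grown at the end of slot `t` (after edge deletions) and `mid t` is the
intermediate graph of slot `t` after vertex generations and edge activations but
before edge deletions. -/
structure GrowthSchedule {V : Type*} [Fintype V] [DecidableEq V]
    (G : SimpleGraph V) (d : ℕ) (k : ℕ) where
  born : V → ℕ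
  parent : V → V
  graph : ℕ → SimpleGraph V
  mid : ℕ → SimpleGraph V
  born_le : ∀ v, born v ≤ k
  init_unique : ∃! v, born v = 0
  parent_born : ∀ v, born v ≠ 0 → born (parent v) < born v
  parent_inj : ∀ v w, born v ≠ 0 → born v = born w → parent v = parent w → v = w
  graph_zero : graph 0 = ⊥
  graph_final : graph k = G
  keep_le_mid : ∀ t, graph t ≤ mid (t + 1)
  parent_edge : ∀ v, born v ≠ 0 → (mid (born v)).Adj v (parent v)
  new_edges : ∀ t v w, (mid (t + 1)).Adj v w → ¬ (graph t).Adj v w →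
    (born v = t + 1 ∧ born w ≤ t ∧
      (w = parent v ∨ ((graph t).Reachable (parent v) w ∧
        (graph t).dist (parent v) w ≤ d - 1))) ∨
    (born w = t + 1 ∧ born v ≤ t ∧
      (v = parent w ∨ ((graph t).Reachable (parent w) v ∧
        (graph t).dist (parent w) v ≤ d - 1)))
  graph_le_mid : ∀ t, graph (t + 1) ≤ mid (t + 1)
  connected : ∀ t v w, born v ≤ t → born w ≤ t → (graph t).Reachable v w

/-- The total number of excess (i.e. deleted) edges of a growth schedule. -/
noncomputable def GrowthSchedule.excess {V : Type*} [Fintype V] [DecidableEq V]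
    {G : SimpleGraph V} {d k : ℕ} (S : GrowthSchedule G d k) : ℕ :=
  ∑ t ∈ Finset.range k, ((S.mid (t + 1)).edgeSet \ (S.graph (t + 1)).edgeSet).ncard

/-- The star graph on `n` vertices: vertex `0` is the center, adjacent to all others. -/
def starGraph (n : ℕ) : SimpleGraph (Fin n) :=
  SimpleGraph.fromRel (fun u _ => u.val = 0)

namespace GrowthSchedule

variable {V : Type*} [Fintype V] [DecidableEq V] {G : SimpleGraph V}

/-- A vertex that is not yet generated is isolated. -/
lemma born_le_of_adj {d k : ℕ} (S : GrowthSchedule G d k) (s : ℕ) :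
    ∀ {v w : V}, (S.graph s).Adj v w → S.born v ≤ s ∧ S.born w ≤ s := by
  induction s with
  | zero =>
    intro v w h
    rw [S.graph_zero] at h
    exact h.elim
  | succ s ih =>
    intro v w h
    by_cases hold : (S.graph s).Adj v w
    · have := ih hold
      omega
    · rcases S.new_edges s v w (S.graph_le_mid s h) hold with ⟨h₁, h₂, -⟩ | ⟨h₁, h₂, -⟩ <;> omega

/-- The retraction undoing slot `s + 1`: vertices generated in that slot go to their parent, all
others are fixed. -/
def retract {d k : ℕ} (S : GrowthSchedule G d k) (s : ℕ) (v : V) : V :=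
  if S.born v = s + 1 then S.parent v else v

lemma retract_of_born_le {d k : ℕ} (S : GrowthSchedule G d k) {s : ℕ} {v : V}
    (h : S.born v ≤ s) : S.retract s v = v :=
  if_neg (by omega)

lemma retract_adj {k : ℕ} (S : GrowthSchedule G 2 k) {s : ℕ} {v w : V}
    (h : (S.graph (s + 1)).Adj v w) :
    S.retract s v = S.retract s w ∨ (S.graph s).Adj (S.retract s v) (S.retract s w) := by
  have near : ∀ {x y : V}, S.born x = s + 1 → S.born y ≤ s →
      (y = S.parent x ∨ ((S.graph s).Reachable (S.parent x) y ∧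
        (S.graph s).dist (S.parent x) y ≤ 2 - 1)) →
      S.retract s x = S.retract s y ∨ (S.graph s).Adj (S.retract s x) (S.retract s y) := by
    intro x y hx hy hxy
    have hrx : S.retract s x = S.parent x := if_pos hx
    rw [hrx, S.retract_of_born_le hy]
    rcases hxy with rfl | ⟨hr, hd⟩
    · exact Or.inl rfl
    · rcases Nat.le_one_iff_eq_zero_or_eq_one.mp hd with h0 | h1
      · exact Or.inl (hr.dist_eq_zero_iff.mp h0)
      · exact Or.inr (SimpleGraph.dist_eq_one_iff_adj.mp h1)
  by_cases hold : (S.graph s).Adj v w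
  · obtain ⟨hv, hw⟩ := S.born_le_of_adj s hold
    rw [S.retract_of_born_le hv, S.retract_of_born_le hw]
    exact Or.inr hold
  · rcases S.new_edges s v w (S.graph_le_mid s h) hold with ⟨h₁, h₂, h₃⟩ | ⟨h₁, h₂, h₃⟩
    · exact near h₁ h₂ h₃
    · exact (near h₁ h₂ h₃).imp Eq.symm SimpleGraph.Adj.symm

lemma exists_walk_retract {k : ℕ} (S : GrowthSchedule G 2 k) {s : ℕ} {v w : V}
    (p : (S.graph (s + 1)).Walk v w) :
    ∃ q : (S.graph s).Walk (S.retract s v) (S.retract s w), q.length ≤ p.length := by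
  induction p with
  | nil => exact ⟨.nil, le_rfl⟩
  | cons h p ih =>
    obtain ⟨q, hq⟩ := ih
    rcases S.retract_adj h with heq | hadj
    · exact ⟨q.copy heq.symm rfl, by simp only [Walk.length_copy, Walk.length_cons]; omega⟩
    · exact ⟨.cons hadj q, by simp only [Walk.length_cons]; omega⟩

lemma dist_le_dist_succ {k : ℕ} (S : GrowthSchedule G 2 k) {s : ℕ} {u w : V}
    (hu : S.born u ≤ s) (hw : S.born w ≤ s) :
    (S.graph s).dist u w ≤ (S.graph (s + 1)).dist u w := by
  -- Connectedness rules out the value `0` that `dist` takes on unreachable pairs.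
  obtain ⟨p, hp⟩ :=
    (S.connected (s + 1) u w (by omega) (by omega)).exists_walk_length_eq_dist
  obtain ⟨q, hq⟩ := S.exists_walk_retract p
  have q_le := (SimpleGraph.dist_le q).trans hq
  rw [S.retract_of_born_le hu, S.retract_of_born_le hw] at q_le
  omega

end GrowthSchedule

/-- In any growth schedule (with `d = 2`), the distance between
two existing vertices never decreases in later slots. -/
theorem dist_nondecreasing {V : Type*} [Fintype V] [DecidableEq V]
    {G : SimpleGraph V} {k : ℕ} (S : GrowthSchedule G 2 k)
    (u w : V) (t₁ t₂ t : ℕ) (hu : S.born u = t₁) (hw : S.born w = t₂)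
    (h12 : t₁ ≤ t₂) (ht : t₂ ≤ t) (htk : t ≤ k) :
    (S.graph t₂).dist u w ≤ (S.graph t).dist u w := by
  clear htk
  induction t, ht using Nat.le_induction with
  | base => exact le_rfl
  | succ s hs ih => exact ih.trans (S.dist_le_dist_succ (by omega) (by omega))
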